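/- For all positive integers m and k and every finitely supported p : ℕ+ → ℤ, T^{(m)}(T^{(k)} p) = T^{(k)}(T^{(m)} p); that is, the basic-degree operators commute. -/

import Mathlib

/-- The basic-degree operator `T^{(m)}`:
`(T^{(m)} p)(j) = p(j) − 2 ∑_{i ∈ supp p} p(i) [gcd(i,m) = j]`. -/
noncomputable def basicOp (m : ℕ) (p : ℕ →₀ ℤ) : ℕ →₀ ℤ :=
  p - 2 • ∑ i ∈ p.support, Finsupp.single (Nat.gcd i m) (p i)

lemma basicOp_eq_mapDomain (m : ℕ) (p : ℕ →₀ ℤ) :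
    basicOp m p = p - 2 • Finsupp.mapDomain.addMonoidHom (fun i => Nat.gcd i m) p := rfl

/-- The basic-degree operators commute. -/
theorem basic_degree_operators_commute (m k : ℕ) (hm : 0 < m) (hk : 0 < k)
    (p : ℕ →₀ ℤ) (hp : ∀ i ∈ p.support, 0 < i) :
    basicOp m (basicOp k p) = basicOp k (basicOp m p) := by
  have h : Finsupp.mapDomain.addMonoidHom (fun i => Nat.gcd i m)
        (Finsupp.mapDomain.addMonoidHom (fun i => Nat.gcd i k) p) =
      Finsupp.mapDomain.addMonoidHom (fun i => Nat.gcd i k)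
        (Finsupp.mapDomain.addMonoidHom (fun i => Nat.gcd i m) p) := by
    simp only [Finsupp.mapDomain.addMonoidHom_apply, ← Finsupp.mapDomain_comp]
    congr 1
    funext i
    exact Nat.gcd_right_comm i k m
  simp only [basicOp_eq_mapDomain, map_sub, map_nsmul, h]
  abel
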